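/- Let T ∈ ℝ^{N×N} be a column-stochastic matrix (nonnegative entries, ∑_i T_{ij} = 1 for all j), and let p, q : Fin N → ℝ be nonnegative vectors. Then ∑_i √((T p)_i · (T q)_i) ≥ ∑_i √(p_i · q_i), where (T p)_i = ∑_j T_{ij} p_j. Consequently, a stochastic map never decreases the Bhattacharyya coefficient, i.e., it contracts both the Bhattacharyya distance √2·arccos(∑_i √(p_i q_i)) and the Hellinger distance 2√(1 − ∑_i √(p_i q_i)) between probability vectors. -/

import Mathlib

open Finset

/-!
The map `(x, y) ↦ √(x * y)` is superadditive and positively homogeneous, so each coordinate of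
the image satisfies `√((T p)ᵢ (T q)ᵢ) ≥ ∑ⱼ Tᵢⱼ √(pⱼ qⱼ)`: this is Cauchy-Schwarz for the vectors
`√(Tᵢⱼ pⱼ)` and `√(Tᵢⱼ qⱼ)`. Summing over `i`, the column sums of `T` collapse the right-hand side
to `∑ⱼ √(pⱼ qⱼ)`.
-/

open scoped Matrix

section

variable {m n : Type*} [Fintype m] [Fintype n]

theorem sum_le_sum_mulVec {R : Type*} [Semiring R] [PartialOrder R] [IsOrderedRing R]
    {T : Matrix m n R} {v : n → R} (hT : ∀ j, 1 ≤ ∑ i, T i j) (hv : ∀ j, 0 ≤ v j) :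
    ∑ j, v j ≤ ∑ i, (T *ᵥ v) i :=
  calc ∑ j, v j ≤ ∑ j, (∑ i, T i j) * v j :=
        sum_le_sum fun j _ => le_mul_of_one_le_left (hv j) (hT j)
    _ = ∑ j, ∑ i, T i j * v j := by simp only [sum_mul]
    _ = ∑ i, (T *ᵥ v) i := sum_comm

/-- The Bhattacharyya coefficient of two vectors, meaningful when both are nonnegative. It measures
the overlap of `p` and `q`, and the Fisher distances are decreasing functions of it. -/
noncomputable def bhattacharyyaCoeff (p q : n → ℝ) : ℝ :=
  ∑ i, √(p i * q i)

/-- The Bhattacharyya distance between two probability vectors, in the normalization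
`√2 * arccos` of the coefficient. For vectors whose coefficient exceeds `1`, `Real.arccos`
truncates it to `0`. -/
noncomputable def bhattacharyyaDist (p q : n → ℝ) : ℝ :=
  √2 * Real.arccos (bhattacharyyaCoeff p q)

/-- The Hellinger distance between two probability vectors, with the factor `2` of the Fisher
normalization. For vectors whose coefficient exceeds `1`, `Real.sqrt` truncates it to `0`. -/
noncomputable def hellingerDist (p q : n → ℝ) : ℝ :=
  2 * √(1 - bhattacharyyaCoeff p q)

theorem bhattacharyyaCoeff_le_sqrt_sum_mul_sum {p q : n → ℝ}
    (hp : ∀ i, 0 ≤ p i) (hq : ∀ i, 0 ≤ q i) :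
    bhattacharyyaCoeff p q ≤ √((∑ i, p i) * ∑ i, q i) := by
  simp only [bhattacharyyaCoeff, Real.sqrt_mul (hp _),
    Real.sqrt_mul (sum_nonneg fun i _ => hp i)]
  exact Real.sum_sqrt_mul_sqrt_le univ hp hq

theorem bhattacharyyaCoeff_mul_mul_left {w : n → ℝ} (hw : ∀ i, 0 ≤ w i) (p q : n → ℝ) :
    bhattacharyyaCoeff (w * p) (w * q) = w ⬝ᵥ fun i => √(p i * q i) := by
  refine sum_congr rfl fun i _ => ?_
  simp only [Pi.mul_apply]
  rw [mul_mul_mul_comm, Real.sqrt_mul (mul_self_nonneg _), Real.sqrt_mul_self (hw i)]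

theorem dotProduct_sqrt_mul_le_sqrt_dotProduct_mul {w p q : n → ℝ}
    (hw : ∀ i, 0 ≤ w i) (hp : ∀ i, 0 ≤ p i) (hq : ∀ i, 0 ≤ q i) :
    (w ⬝ᵥ fun i => √(p i * q i)) ≤ √((w ⬝ᵥ p) * (w ⬝ᵥ q)) := by
  rw [← bhattacharyyaCoeff_mul_mul_left hw]
  exact bhattacharyyaCoeff_le_sqrt_sum_mul_sum (fun i => mul_nonneg (hw i) (hp i))
    fun i => mul_nonneg (hw i) (hq i)

theorem bhattacharyyaCoeff_le_bhattacharyyaCoeff_mulVec {T : Matrix m n ℝ} {p q : n → ℝ}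
    (hTnonneg : ∀ i j, 0 ≤ T i j) (hTcol : ∀ j, 1 ≤ ∑ i, T i j)
    (hp : ∀ j, 0 ≤ p j) (hq : ∀ j, 0 ≤ q j) :
    bhattacharyyaCoeff p q ≤ bhattacharyyaCoeff (T *ᵥ p) (T *ᵥ q) :=
  calc bhattacharyyaCoeff p q ≤ ∑ i, (T *ᵥ fun j => √(p j * q j)) i :=
        sum_le_sum_mulVec hTcol fun _ => Real.sqrt_nonneg _
    _ ≤ bhattacharyyaCoeff (T *ᵥ p) (T *ᵥ q) :=
        sum_le_sum fun i _ => dotProduct_sqrt_mul_le_sqrt_dotProduct_mul (hTnonneg i) hp hq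

theorem bhattacharyyaDist_le_of_bhattacharyyaCoeff_le {p q : n → ℝ} {p' q' : m → ℝ}
    (h : bhattacharyyaCoeff p q ≤ bhattacharyyaCoeff p' q') :
    bhattacharyyaDist p' q' ≤ bhattacharyyaDist p q :=
  mul_le_mul_of_nonneg_left (Real.arccos_le_arccos h) (Real.sqrt_nonneg 2)

theorem hellingerDist_le_of_bhattacharyyaCoeff_le {p q : n → ℝ} {p' q' : m → ℝ}
    (h : bhattacharyyaCoeff p q ≤ bhattacharyyaCoeff p' q') :
    hellingerDist p' q' ≤ hellingerDist p q :=
  mul_le_mul_of_nonneg_left (Real.sqrt_le_sqrt (sub_le_sub_left h 1)) zero_le_two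

theorem stochastic_increases_bhattacharyya_general {T : Matrix m n ℝ} {p q : n → ℝ}
    (hTnonneg : ∀ i j, 0 ≤ T i j) (hTcol : ∀ j, ∑ i, T i j = 1)
    (hp : ∀ j, 0 ≤ p j) (hq : ∀ j, 0 ≤ q j) :
    bhattacharyyaCoeff p q ≤ bhattacharyyaCoeff (T *ᵥ p) (T *ᵥ q) ∧
    (∑ j, p j = 1 → ∑ j, q j = 1 →
      bhattacharyyaDist (T *ᵥ p) (T *ᵥ q) ≤ bhattacharyyaDist p q ∧
      hellingerDist (T *ᵥ p) (T *ᵥ q) ≤ hellingerDist p q) := by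
  have coeff_le : bhattacharyyaCoeff p q ≤ bhattacharyyaCoeff (T *ᵥ p) (T *ᵥ q) :=
    bhattacharyyaCoeff_le_bhattacharyyaCoeff_mulVec hTnonneg (fun j => (hTcol j).ge) hp hq
  exact ⟨coeff_le, fun _ _ => ⟨bhattacharyyaDist_le_of_bhattacharyyaCoeff_le coeff_le,
    hellingerDist_le_of_bhattacharyyaCoeff_le coeff_le⟩⟩

end

/-- A column-stochastic map never decreases the Bhattacharyya coefficient of
nonnegative vectors; consequently it contracts both the Bhattacharyya and the Hellinger
distances between probability vectors. -/
theorem stochastic_increases_bhattacharyya (N : ℕ)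
    (T : Matrix (Fin N) (Fin N) ℝ)
    (hTnonneg : ∀ i j, 0 ≤ T i j) (hTcol : ∀ j, ∑ i, T i j = 1)
    (p q : Fin N → ℝ) (hp : ∀ i, 0 ≤ p i) (hq : ∀ i, 0 ≤ q i) :
    (∑ i, Real.sqrt (p i * q i) ≤ ∑ i, Real.sqrt (T.mulVec p i * T.mulVec q i)) ∧
    ((∑ i, p i = 1) → (∑ i, q i = 1) →
      (Real.sqrt 2 * Real.arccos (∑ i, Real.sqrt (T.mulVec p i * T.mulVec q i))
          ≤ Real.sqrt 2 * Real.arccos (∑ i, Real.sqrt (p i * q i))) ∧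
      (2 * Real.sqrt (1 - ∑ i, Real.sqrt (T.mulVec p i * T.mulVec q i))
          ≤ 2 * Real.sqrt (1 - ∑ i, Real.sqrt (p i * q i)))) :=
  stochastic_increases_bhattacharyya_general hTnonneg hTcol hp hq
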